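/- Let Φ be an N-function satisfying the Δ₂-condition globally, such that Φ(t) ≤ c|t|⁶ for all t ∈ ℝ (for some c > 0) and lim_{t→∞} Φ(t)/t² = ∞. Let Ψ := Φ*, let Ψ⁻¹ : [0,∞) → [0,∞) denote the inverse of the restriction of Ψ to [0,∞), and set Υ(t) := Φ(Ψ⁻¹(|t|)). If Υ is convex, then Υ is an N-function and satisfies the Δ₂-condition globally. -/

import Mathlib

/-!
Substituting `u = Ψ⁻¹(t)` turns every claim about `Υ(t) = Φ(Ψ⁻¹(t))` into a comparison of `Φ(u)`
with `Ψ(u) = t`.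

* At infinity, `Φ(s) ≥ s²` for large `s` gives `Ψ(u) ≤ u²` for large `u`, so
  `Υ(t)/t = Φ(u)/Ψ(u) ≥ Φ(u)/u² → ∞`.
* At zero, taking `s = u` in the supremum and using `Φ(u) ≤ c u⁶` gives `Ψ(u) ≥ u² - c u⁶ ≥ u²/2`
  for small `u`, so `Υ(t)/t ≤ 2 c u⁴ → 0`.
* Since `Ψ(2u) ≥ 2 Ψ(u)`, one has `Ψ⁻¹(2t) ≤ 2 Ψ⁻¹(t)`, so `Υ` inherits the Δ₂-condition,
  with the same constant, from `Φ`.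

The remaining properties are immediate, convexity being assumed.
-/

open MeasureTheory Filter Real Set
open scoped RealInnerProductSpace ENNReal Topology

noncomputable section

/-- An N-function: an even convex function `Φ : ℝ → [0,∞)` vanishing exactly at `0`,
with `Φ(t)/t → 0` as `t → 0` and `Φ(t)/t → ∞` as `t → ∞`. -/
def IsNFunction (Φ : ℝ → ℝ) : Prop :=
  (∀ t, Φ (-t) = Φ t) ∧ ConvexOn ℝ Set.univ Φ ∧ (∀ t, 0 ≤ Φ t) ∧
  (∀ t, Φ t = 0 ↔ t = 0) ∧
  Tendsto (fun t => Φ t / t) (𝓝[≠] (0:ℝ)) (𝓝 0) ∧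
  Tendsto (fun t => Φ t / t) atTop atTop

/-- The complementary function `Φ*(t) = sup { s|t| - Φ(s) : s ≥ 0 }` of an N-function. -/
def conjN (Φ : ℝ → ℝ) (t : ℝ) : ℝ := sSup ((fun s => s * |t| - Φ s) '' Set.Ici (0:ℝ))

/-- The global Δ₂-condition: `Φ(2t) ≤ K Φ(t)` for some `K > 1` and all `t ∈ ℝ`. -/
def Delta2 (Φ : ℝ → ℝ) : Prop := ∃ K > 1, ∀ t, Φ (2 * t) ≤ K * Φ t

lemma IsNFunction.mono {Φ : ℝ → ℝ} (hΦ : IsNFunction Φ) {a b : ℝ} (ha : 0 ≤ a) (hab : a ≤ b) :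
    Φ a ≤ Φ b := by
  obtain ⟨-, hconv, hnn, hz, -, -⟩ := hΦ
  rcases eq_or_lt_of_le (ha.trans hab) with hb | hb
  · have : a = b := by linarith
    rw [this]
  · have h0 : Φ 0 = 0 := (hz 0).2 rfl
    -- `a` is the convex combination of `0` and `b` with weight `a / b`
    have h := hconv.2 (mem_univ (0:ℝ)) (mem_univ b)
      (sub_nonneg.2 ((div_le_one hb).2 hab)) (by positivity : 0 ≤ a / b) (by ring)
    simp only [smul_eq_mul, mul_zero, zero_add, h0] at h
    rw [div_mul_cancel₀ a hb.ne'] at h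
    have h1 : a / b ≤ 1 := (div_le_one hb).2 hab
    exact h.trans (mul_le_of_le_one_left (hnn b) h1)

/-- Superlinear growth of `Φ` makes the supremum defining `conjN Φ` finite. -/
lemma bddAbove_conjN {Φ : ℝ → ℝ} (hΦ : IsNFunction Φ) (t : ℝ) :
    BddAbove ((fun s => s * |t| - Φ s) '' Set.Ici (0:ℝ)) := by
  obtain ⟨-, -, hnn, -, -, hinf⟩ := hΦ
  obtain ⟨N, hN⟩ := eventually_atTop.1
    ((hinf.eventually_ge_atTop |t|).and (eventually_gt_atTop (0:ℝ)))
  have hN0 : 0 < N := (hN N le_rfl).2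
  refine ⟨N * |t|, ?_⟩
  rintro _ ⟨s, hs, rfl⟩
  have hs : 0 ≤ s := hs
  have ht := abs_nonneg t
  dsimp only
  rcases le_total s N with h | h
  · nlinarith [hnn s]
  · obtain ⟨h1, h2⟩ := hN s h
    rw [le_div_iff₀ h2] at h1
    nlinarith

/-- Young's inequality. -/
lemma le_conjN {Φ : ℝ → ℝ} (hΦ : IsNFunction Φ) {s t : ℝ} (hs : 0 ≤ s) (ht : 0 ≤ t) :
    s * t - Φ s ≤ conjN Φ t := by
  have := le_csSup (bddAbove_conjN hΦ t) (mem_image_of_mem _ (mem_Ici.2 hs))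
  simpa only [conjN, abs_of_nonneg ht] using this

lemma conjN_le {Φ : ℝ → ℝ} {t B : ℝ} (ht : 0 ≤ t)
    (h : ∀ s, 0 ≤ s → s * t - Φ s ≤ B) : conjN Φ t ≤ B := by
  refine csSup_le ⟨_, mem_image_of_mem _ (mem_Ici.2 le_rfl)⟩ ?_
  rintro _ ⟨s, hs, rfl⟩
  simpa only [abs_of_nonneg ht] using h s hs

lemma conjN_zero {Φ : ℝ → ℝ} (hΦ : IsNFunction Φ) : conjN Φ 0 = 0 := by
  apply le_antisymm
  · exact conjN_le le_rfl fun s _ => by linarith [hΦ.2.2.1 s]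
  · have := le_conjN hΦ (s := 0) (t := 0) le_rfl le_rfl
    rw [(hΦ.2.2.2.1 0).2 rfl] at this
    simpa using this

lemma conjN_mono {Φ : ℝ → ℝ} (hΦ : IsNFunction Φ) {a b : ℝ} (ha : 0 ≤ a) (hab : a ≤ b) :
    conjN Φ a ≤ conjN Φ b := by
  refine conjN_le ha fun s hs => ?_
  have := le_conjN hΦ hs (ha.trans hab)
  nlinarith

lemma two_mul_conjN_le {Φ : ℝ → ℝ} (hΦ : IsNFunction Φ) {a : ℝ} (ha : 0 ≤ a) :
    2 * conjN Φ a ≤ conjN Φ (2 * a) := by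
  have : conjN Φ a ≤ conjN Φ (2 * a) / 2 := conjN_le ha fun s hs => by
    have h1 := le_conjN hΦ hs (by linarith : 0 ≤ 2 * a)
    have h2 := hΦ.2.2.1 s
    linarith
  linarith

lemma eventually_conjN_le_sq {Φ : ℝ → ℝ} (hΦ : IsNFunction Φ)
    (hquad : Tendsto (fun t => Φ t / t ^ 2) atTop atTop) :
    ∀ᶠ u in atTop, conjN Φ u ≤ u ^ 2 := by
  obtain ⟨N, hN⟩ := eventually_atTop.1
    ((hquad.eventually_ge_atTop 1).and (eventually_gt_atTop (0:ℝ)))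
  filter_upwards [eventually_ge_atTop N, eventually_gt_atTop 0] with u hu hu0
  refine conjN_le hu0.le fun s hs => ?_
  rcases le_total s N with h | h
  · nlinarith [hΦ.2.2.1 s]
  · obtain ⟨h1, h2⟩ := hN s h
    rw [le_div_iff₀ (by positivity)] at h1
    nlinarith [sq_nonneg (s - u)]

/-- Lemma `lem:V (i)`: let `Φ` be an N-function satisfying the Δ₂-condition globally,
with `Φ(t) ≤ c|t|⁶` for some `c > 0` and all `t`, and `Φ(t)/t² → ∞` as `t → ∞`.
Let `Ψ = Φ*`, let `Ψ⁻¹` be the inverse of `Ψ` restricted to `[0,∞)`, and let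
`Υ(t) := Φ(Ψ⁻¹(|t|))`. If `Υ` is convex, then `Υ` is an N-function satisfying the
Δ₂-condition globally. -/
theorem comp_inv_conj_isNFunction_delta2 (Φ Ψ Ψinv : ℝ → ℝ) (c : ℝ)
    (hΦ : IsNFunction Φ) (hΔ : Delta2 Φ)
    (hc : 0 < c) (hb : ∀ t, Φ t ≤ c * |t| ^ (6:ℕ))
    (hquad : Tendsto (fun t => Φ t / t ^ 2) atTop atTop)
    (hΨ : Ψ = conjN Φ)
    (hinv1 : ∀ s, 0 ≤ s → 0 ≤ Ψinv s ∧ Ψ (Ψinv s) = s)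
    (hinv2 : ∀ t, 0 ≤ t → Ψinv (Ψ t) = t)
    (hconv : ConvexOn ℝ Set.univ (fun t => Φ (Ψinv |t|))) :
    IsNFunction (fun t => Φ (Ψinv |t|)) ∧ Delta2 (fun t => Φ (Ψinv |t|)) := by
  subst hΨ
  have hnn := hΦ.2.2.1
  have hz := hΦ.2.2.2.1
  have hinv0 : Ψinv 0 = 0 := by
    have := hinv2 0 le_rfl
    rwa [conjN_zero hΦ] at this
  -- the left inverse upgrades monotonicity of `conjN Φ` to strict monotonicity
  have hstrict : ∀ a b, 0 ≤ a → a < b → conjN Φ a < conjN Φ b := fun a b ha hab =>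
    lt_of_le_of_ne (conjN_mono hΦ ha hab.le) fun h => by
      have h1 := hinv2 a ha
      rw [h, hinv2 b (ha.trans hab.le)] at h1
      linarith
  -- the Galois-type inequality that transfers bounds on `Ψ` to bounds on `Ψ⁻¹`
  have hle : ∀ t v, 0 ≤ t → 0 ≤ v → t ≤ conjN Φ v → Ψinv t ≤ v := fun t v ht hv h => by
    by_contra! hlt
    have := hstrict _ _ hv hlt
    rw [(hinv1 t ht).2] at this
    linarith
  refine ⟨⟨fun t => by simp, hconv, fun t => hnn _, fun t => ?_, ?_, ?_⟩, ?_⟩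
  · rw [hz]
    constructor
    · intro h
      have := (hinv1 |t| (abs_nonneg t)).2
      rw [h, conjN_zero hΦ] at this
      exact abs_eq_zero.1 this.symm
    · rintro rfl
      simpa using hinv0
  · have hlim : Tendsto (fun t => Ψinv |t|) (𝓝 (0:ℝ)) (𝓝 0) := by
      rw [Metric.tendsto_nhds]
      intro ε hε
      have hpos : 0 < conjN Φ (ε / 2) := by
        have := hstrict 0 (ε / 2) le_rfl (by positivity)
        rwa [conjN_zero hΦ] at this
      have hev : ∀ᶠ t in 𝓝 (0:ℝ), |t| < conjN Φ (ε / 2) := by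
        have : Tendsto (fun t : ℝ => |t|) (𝓝 0) (𝓝 0) := by
          simpa using (continuous_abs : Continuous fun t : ℝ => |t|).tendsto 0
        exact this.eventually_lt_const hpos
      filter_upwards [hev] with t ht
      have h1 := hle |t| (ε / 2) (abs_nonneg t) (by positivity) ht.le
      rw [Real.dist_eq, sub_zero, abs_of_nonneg (hinv1 _ (abs_nonneg t)).1]
      linarith
    have hlim4 : Tendsto (fun t => 2 * c * (Ψinv |t|) ^ 4) (𝓝 (0:ℝ)) (𝓝 0) := by
      simpa using (hlim.pow 4).const_mul (2 * c)
    -- smallness of `u` needed for `c u⁶ ≤ u² / 2`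
    have hsmall : ∀ᶠ t in 𝓝 (0:ℝ), 2 * c * (Ψinv |t|) ^ 4 < 1 :=
      hlim4.eventually_lt_const one_pos
    refine squeeze_zero_norm' ?_ (hlim4.mono_left nhdsWithin_le_nhds)
    filter_upwards [nhdsWithin_le_nhds hsmall, self_mem_nhdsWithin] with t ht ht0
    obtain ⟨hu, hut⟩ := hinv1 |t| (abs_nonneg t)
    have htpos : 0 < |t| := abs_pos.2 ht0
    rw [Real.norm_eq_abs, abs_div, abs_of_nonneg (hnn _), div_le_iff₀ htpos]
    set u := Ψinv |t|
    have hbu := hb u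
    rw [abs_of_nonneg hu] at hbu
    have hy := le_conjN hΦ hu hu
    rw [hut] at hy
    have h2 : u ^ 2 / 2 ≤ |t| := by
      nlinarith [mul_le_mul_of_nonneg_left ht.le (sq_nonneg u)]
    calc Φ u ≤ 2 * c * u ^ 4 * (u ^ 2 / 2) := by linarith
      _ ≤ 2 * c * u ^ 4 * |t| := by gcongr
  · have hlim : Tendsto Ψinv atTop atTop := by
      rw [tendsto_atTop]
      intro M
      filter_upwards [eventually_gt_atTop (conjN Φ (max M 0)), eventually_ge_atTop 0] with t ht ht0
      by_contra! hlt
      obtain ⟨hu, hut⟩ := hinv1 t ht0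
      have := conjN_mono hΦ hu (hlt.le.trans (le_max_left M 0))
      linarith
    refine tendsto_atTop_mono' atTop ?_ (hquad.comp hlim)
    filter_upwards [eventually_gt_atTop 0, hlim.eventually (eventually_conjN_le_sq hΦ hquad)]
      with t ht0 hsq
    rw [(hinv1 t ht0.le).2] at hsq
    simp only [Function.comp, abs_of_pos ht0]
    exact div_le_div_of_nonneg_left (hnn _) ht0 hsq
  · obtain ⟨K, hK, hK2⟩ := hΔ
    refine ⟨K, hK, fun t => ?_⟩
    obtain ⟨hu, hut⟩ := hinv1 |t| (abs_nonneg t)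
    have h2t : |2 * t| = 2 * |t| := by simp [abs_mul]
    have hdouble : Ψinv |2 * t| ≤ 2 * Ψinv |t| := by
      refine hle _ _ (abs_nonneg _) (by linarith) ?_
      have := two_mul_conjN_le hΦ hu
      rw [hut] at this
      rwa [h2t]
    exact (hΦ.mono (hinv1 _ (abs_nonneg _)).1 hdouble).trans (hK2 _)
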